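/- Let m and δ be positive integers with d = δ mod 2m satisfying d ≤ m, and let S = {m, m+δ, 2m+δ}. Then for every integer r with 1 ≤ r ≤ d, v_S(2m + δ − d + r) = 3. (This is the factor 3^d of the period, occupying the d positions following position 2m + δ − d.) -/

import Mathlib

/-- The minimum excludant of a finite set of naturals. -/
noncomputable def mex (A : Finset ℕ) : ℕ := sInf {n : ℕ | n ∉ A}

/-- The sink-subtraction nim-value function: `sinkVal S 0 = 0`, and for `x ≥ 1`,
`sinkVal S x = mex { sinkVal S (x ∸ s) : s ∈ S }` (when every `s ∈ S` is positive,
since `(x+1) - s = x - (s-1)` in truncated subtraction). -/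
noncomputable def sinkVal (S : Finset ℕ) : ℕ → ℕ
  | 0 => 0
  | x + 1 => mex (S.image fun s => sinkVal S (x - (s - 1)))
termination_by x => x
decreasing_by omega

/-!
On positions `1, …, m + δ` the moves `m + δ` and `2 * m + δ` always reach the sink, so only the
move `m` matters: the values are `1` on the first block of `m` positions and alternate between `1`
and `2` from block to block. With `d = δ % (2 * m)`, the position `2 * m + δ - d + r` reaches a
block of `2`s by `m`, the position `m + r - d` in the first block of `1`s by `m + δ`, and the sink
by `2 * m + δ`, so its value is `mex {2, 1, 0} = 3`.
-/

theorem mex_eq_of_notMem {A : Finset ℕ} {n : ℕ} (hn : n ∉ A) (hlt : ∀ k < n, k ∈ A) :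
    mex A = n :=
  IsLeast.csInf_eq ⟨hn, fun _ hk => not_lt.mp fun h => hk (hlt _ h)⟩

theorem mex_mod_two_add_one_pair (k : ℕ) : mex {k % 2 + 1, 0} = (k + 1) % 2 + 1 := by
  rcases Nat.mod_two_eq_zero_or_one k with hk | hk
  all_goals
    rw [Nat.add_mod, hk]
    exact mex_eq_of_notMem (by decide) (by decide)

theorem sinkVal_zero (S : Finset ℕ) : sinkVal S 0 = 0 := by
  rw [sinkVal]

theorem sinkVal_eq_mex {S : Finset ℕ} (hS : ∀ s ∈ S, 0 < s) {x : ℕ} (hx : 0 < x) :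
    sinkVal S x = mex (S.image fun s => sinkVal S (x - s)) := by
  obtain ⟨y, rfl⟩ := Nat.exists_eq_succ_of_ne_zero hx.ne'
  rw [sinkVal]
  congr 1
  refine Finset.image_congr fun s hs => ?_
  have hsub : y - (s - 1) = y + 1 - s := by
    have := hS s hs
    omega
  simp only [hsub, Nat.succ_eq_add_one]

theorem sinkVal_insert_of_le {m x : ℕ} {S : Finset ℕ} (hm : 0 < m) (hS : S.Nonempty) (hx : 0 < x)
    (hle : ∀ s ∈ S, x ≤ s) :
    sinkVal (insert m S) x = mex {sinkVal (insert m S) (x - m), 0} := by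
  have hpos : ∀ s ∈ insert m S, 0 < s :=
    Finset.forall_mem_insert .. |>.mpr ⟨hm, fun s hs => hx.trans_le (hle s hs)⟩
  have hsink : S.image (fun s => sinkVal (insert m S) (x - s)) = {0} := by
    rw [← Finset.image_const hS 0]
    refine Finset.image_congr fun s hs => ?_
    simp only [Nat.sub_eq_zero_of_le (hle s hs), sinkVal_zero]
  rw [sinkVal_eq_mex hpos hx, Finset.image_insert, hsink]

theorem sinkVal_insert_succ {m x : ℕ} {S : Finset ℕ} (hm : 0 < m) (hS : S.Nonempty)
    (hlt : ∀ s ∈ S, x < s) : sinkVal (insert m S) (x + 1) = x / m % 2 + 1 := by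
  induction x using Nat.strong_induction_on with
  | _ x ih =>
    rw [sinkVal_insert_of_le hm hS x.succ_pos hlt]
    rcases lt_or_ge x m with hxm | hmx
    · rw [Nat.sub_eq_zero_of_le hxm, sinkVal_zero, Nat.div_eq_of_lt hxm]
      exact mex_eq_of_notMem (by decide) (by decide)
    · have ih' := ih (x - m) (by omega) fun s hs => (x.sub_le m).trans_lt (hlt s hs)
      rw [Nat.succ_eq_add_one, Nat.sub_add_comm hmx, ih', mex_mod_two_add_one_pair,
        Nat.div_eq_sub_div hm hmx]

theorem sinkVal_additive_eq_mex {m x : ℕ} (δ : ℕ) (hm : 0 < m) (hx : 0 < x) :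
    sinkVal {m, m + δ, 2 * m + δ} x =
      mex {sinkVal {m, m + δ, 2 * m + δ} (x - m), sinkVal {m, m + δ, 2 * m + δ} (x - (m + δ)),
        sinkVal {m, m + δ, 2 * m + δ} (x - (2 * m + δ))} := by
  have hpos : ∀ s ∈ ({m, m + δ, 2 * m + δ} : Finset ℕ), 0 < s := by
    simp [hm]
  rw [sinkVal_eq_mex hpos hx, Finset.image_insert, Finset.image_insert, Finset.image_singleton]

theorem sinkVal_additive_block {m δ j i : ℕ} (hi : i < m) (hlt : m * j + i < m + δ) :
    sinkVal {m, m + δ, 2 * m + δ} (m * j + i + 1) = j % 2 + 1 := by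
  have hm : 0 < m := i.zero_le.trans_lt hi
  have hsink : ∀ s ∈ ({m + δ, 2 * m + δ} : Finset ℕ), m * j + i < s := by
    simp only [Finset.mem_insert, Finset.mem_singleton, forall_eq_or_imp, forall_eq]
    omega
  rw [sinkVal_insert_succ hm (Finset.insert_nonempty ..) hsink, Nat.mul_add_div hm,
    Nat.div_eq_of_lt hi, add_zero]

theorem stmt9_general (m δ : ℕ) (S : Finset ℕ) (hS : S = {m, m + δ, 2 * m + δ})
    (d : ℕ) (hd : d = δ % (2 * m)) :
    ∀ r : ℕ, 1 ≤ r → r ≤ d → r ≤ m → d < m + r → sinkVal S (2 * m + δ - d + r) = 3 := by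
  subst hS
  intro r hr hrd hrm hdr
  set k := δ / (2 * m)
  have hdiv : m * (2 * k) + d = δ := by
    rw [hd, ← mul_assoc, mul_comm m 2, Nat.div_add_mod]
  have hblock : m * (2 * k + 1) = m * (2 * k) + m := mul_add_one ..
  have h₂ : sinkVal {m, m + δ, 2 * m + δ} (2 * m + δ - d + r - m) = 2 := by
    rw [show 2 * m + δ - d + r - m = m * (2 * k + 1) + (r - 1) + 1 by omega,
      sinkVal_additive_block (by omega) (by omega), Nat.mul_add_mod]
  have h₁ : sinkVal {m, m + δ, 2 * m + δ} (2 * m + δ - d + r - (m + δ)) = 1 := by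
    rw [show 2 * m + δ - d + r - (m + δ) = m * 0 + (m + r - d - 1) + 1 by omega,
      sinkVal_additive_block (by omega) (by omega)]
  have h₀ : sinkVal {m, m + δ, 2 * m + δ} (2 * m + δ - d + r - (2 * m + δ)) = 0 := by
    rw [Nat.sub_eq_zero_of_le (by omega), sinkVal_zero]
  rw [sinkVal_additive_eq_mex δ (by omega) (by omega), h₂, h₁, h₀]
  exact mex_eq_of_notMem (by decide) (by decide)

theorem stmt9 (m δ : ℕ) (hm : 0 < m) (hδ : 0 < δ)
    (S : Finset ℕ) (hS : S = {m, m + δ, 2 * m + δ})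
    (d : ℕ) (hd : d = δ % (2 * m)) (hdm : d ≤ m) :
    ∀ r : ℕ, 1 ≤ r → r ≤ d → sinkVal S (2 * m + δ - d + r) = 3 := fun r hr hrd =>
  stmt9_general m δ S hS d hd r hr hrd (hrd.trans hdm) (by omega)
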